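/- Let A be a finite alphabet with letters a, c ∈ A. For every word w ∈ A*, the number of occurrences of the two-letter word ac as a factor of w (i.e., the number of indices i with w_i = a and w_{i+1} = c) equals ∑_{v ∈ A*} (−1)^{|v|} · binom(w, avc), where the sum is over all words v (only words v with avc a subword of w contribute, so the sum is finite) and avc denotes the concatenation of the letter a, the word v, and the letter c. -/

import Mathlib

/-- `subwordCount v u` is the number of occurrences of `u` as a (scattered) subword of `v`,
i.e. the number of strictly increasing maps `φ` from the positions of `u` to the positions of
`v` matching the letters. -/
def subwordCount {A : Type*} [DecidableEq A] (v u : List A) : ℕ :=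
  ((Finset.univ : Finset (Fin u.length → Fin v.length)).filter
    (fun φ => (∀ i j : Fin u.length, i < j → φ i < φ j) ∧
      ∀ i : Fin u.length, u.get i = v.get (φ i))).card

/-!
Write `⟨f, w⟩ = ∑_u binom(w, u) f(u)`. An occurrence of a subword in `xw` either skips or uses the
letter `x`, so `⟨f, xw⟩ = ⟨f, w⟩ + ⟨f(x·), w⟩`. If `e(vc) = (-1)^|v|` and `e` vanishes on all other
words, then `e(x·) = -e + [x = c] δ_ε`, where `δ_ε` is the indicator of the empty word and
`⟨δ_ε, w⟩ = 1`; the two copies of `⟨e, w⟩` cancel, and `⟨e, xw⟩ = [x = c]` only sees the first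
letter. If `g(avc) = (-1)^|v|` and `g` vanishes on all other words, then `g(x·) = [x = a] e`, so
prepending `x` to `w` raises `⟨g, w⟩` by one exactly when it creates a factor `ac` at the front.
-/

theorem exists_succ_comp_eq {ι : Type*} {n : ℕ} {φ : ι → Fin (n + 1)} (h : ∀ i, φ i ≠ 0) :
    ∃ ψ : ι → Fin n, Fin.succ ∘ ψ = φ := by
  choose ψ hψ using fun i ↦ Fin.exists_succ_eq.mpr (h i)
  exact ⟨ψ, funext hψ⟩

section Occurrences

variable {A : Type*}

/-- The map underlying an occurrence of `u` in `w`, read as an occurrence of `u` in `x :: w` that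
skips the letter `x`. -/
def skipFirst (x : A) {w u : List A} (ψ : Fin u.length → Fin w.length) :
    Fin u.length → Fin (x :: w).length :=
  Fin.succ ∘ ψ

/-- The map underlying an occurrence of `u` in `w`, extended to an occurrence of `y :: u` in
`x :: w` that sends the letter `y` to the letter `x`. -/
def matchFirst (x y : A) {w u : List A} (ψ : Fin u.length → Fin w.length) :
    Fin (y :: u).length → Fin (x :: w).length :=
  Fin.cons (α := fun _ ↦ Fin (w.length + 1)) 0 (Fin.succ ∘ ψ)

theorem skipFirst_injective (x : A) (w u : List A) :
    Function.Injective (skipFirst x : (Fin u.length → Fin w.length) → _) :=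
  (Fin.succ_injective _).comp_left

theorem matchFirst_injective (x y : A) (w u : List A) :
    Function.Injective (matchFirst x y : (Fin u.length → Fin w.length) → _) :=
  (Fin.cons_right_injective _).comp (Fin.succ_injective _).comp_left

theorem skipFirst_ne_matchFirst {x y : A} {w u : List A} (ψ : Fin (y :: u).length → Fin w.length)
    (χ : Fin u.length → Fin w.length) : skipFirst x ψ ≠ matchFirst x y χ :=
  fun h ↦ Fin.succ_ne_zero _ (congrFun h (0 : Fin (u.length + 1)))

theorem eq_skipFirst_or_eq_matchFirst_of_strictMono {x y : A} {w u : List A}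
    {φ : Fin (y :: u).length → Fin (x :: w).length} (hφ : StrictMono φ) :
    (∃ ψ, skipFirst x ψ = φ) ∨ ∃ ψ, matchFirst x y ψ = φ := by
  by_cases h0 : φ (0 : Fin (u.length + 1)) = (0 : Fin (w.length + 1))
  · obtain ⟨ψ, hψ⟩ := exists_succ_comp_eq (φ := Fin.tail φ)
      fun i ↦ Fin.ne_zero_of_lt (hφ (Fin.succ_pos i))
    exact .inr ⟨ψ, by rw [matchFirst, hψ, ← h0]; exact Fin.cons_self_tail φ⟩
  · exact .inl (exists_succ_comp_eq fun i ↦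
      Fin.pos_iff_ne_zero.mp ((Fin.pos_iff_ne_zero.mpr h0).trans_le (hφ.monotone (Fin.zero_le i))))

variable [DecidableEq A]

/-- The occurrences of `u` as a subword of `w`, encoded as in `subwordCount`. -/
def occurrences (w u : List A) : Finset (Fin u.length → Fin w.length) :=
  {φ | (∀ i j, i < j → φ i < φ j) ∧ ∀ i, u.get i = w.get (φ i)}

theorem card_occurrences (w u : List A) : (occurrences w u).card = subwordCount w u := rfl

theorem mem_occurrences {w u : List A} {φ : Fin u.length → Fin w.length} :
    φ ∈ occurrences w u ↔ StrictMono φ ∧ ∀ i, u.get i = w.get (φ i) := by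
  simp only [occurrences, Finset.mem_filter_univ, StrictMono]

theorem skipFirst_mem_occurrences {x : A} {w u : List A} {ψ : Fin u.length → Fin w.length} :
    skipFirst x ψ ∈ occurrences (x :: w) u ↔ ψ ∈ occurrences w u := by
  simp [mem_occurrences, StrictMono, skipFirst]

theorem matchFirst_mem_occurrences {x y : A} {w u : List A} {ψ : Fin u.length → Fin w.length} :
    matchFirst x y ψ ∈ occurrences (x :: w) (y :: u) ↔ x = y ∧ ψ ∈ occurrences w u := by
  rw [mem_occurrences]
  refine (and_congr Fin.strictMono_cons Fin.forall_fin_succ).trans ?_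
  simp [mem_occurrences, StrictMono, matchFirst, eq_comm, and_left_comm]

theorem occurrences_cons_cons (x y : A) (w u : List A) :
    occurrences (x :: w) (y :: u) = (occurrences w (y :: u)).image (skipFirst x) ∪
      if x = y then (occurrences w u).image (matchFirst x y) else ∅ := by
  ext φ
  simp only [Finset.mem_union, Finset.mem_image]
  constructor
  · intro hφ
    rcases eq_skipFirst_or_eq_matchFirst_of_strictMono (mem_occurrences.mp hφ).1 with
      ⟨ψ, rfl⟩ | ⟨ψ, rfl⟩
    · exact .inl ⟨ψ, skipFirst_mem_occurrences.mp hφ, rfl⟩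
    · obtain ⟨hxy, hψ⟩ := matchFirst_mem_occurrences.mp hφ
      exact .inr (by rw [if_pos hxy]; exact Finset.mem_image_of_mem _ hψ)
  · rintro (⟨ψ, hψ, rfl⟩ | hφ)
    · exact skipFirst_mem_occurrences.mpr hψ
    · split_ifs at hφ with hxy
      · obtain ⟨ψ, hψ, rfl⟩ := Finset.mem_image.mp hφ
        exact matchFirst_mem_occurrences.mpr ⟨hxy, hψ⟩
      · simp at hφ

theorem subwordCount_nil_right (w : List A) : subwordCount w [] = 1 := by
  simp [subwordCount]

theorem subwordCount_nil_cons (y : A) (u : List A) : subwordCount [] (y :: u) = 0 := by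
  simp [subwordCount]

theorem subwordCount_cons_cons (x y : A) (w u : List A) :
    subwordCount (x :: w) (y :: u) =
      subwordCount w (y :: u) + if x = y then subwordCount w u else 0 := by
  have hdisj : Disjoint ((occurrences w (y :: u)).image (skipFirst x))
      (if x = y then (occurrences w u).image (matchFirst x y) else ∅) := by
    split_ifs
    · simp [Finset.disjoint_left, (skipFirst_ne_matchFirst _ _).symm]
    · exact Finset.disjoint_empty_right _
  rw [← card_occurrences, occurrences_cons_cons, Finset.card_union_of_disjoint hdisj,
    Finset.card_image_of_injective _ (skipFirst_injective x _ _), apply_ite Finset.card,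
    Finset.card_image_of_injective _ (matchFirst_injective x y _ _), Finset.card_empty,
    card_occurrences, card_occurrences]

theorem count_sublists'_eq_subwordCount [BEq (List A)] [LawfulBEq (List A)] (w u : List A) :
    w.sublists'.count u = subwordCount w u := by
  induction w generalizing u with
  | nil => cases u <;> simp [subwordCount_nil_right, subwordCount_nil_cons]
  | cons x w ih =>
    rw [List.sublists'_cons, List.count_append, ih]
    cases u with
    | nil => simp [subwordCount_nil_right, List.count_eq_zero]
    | cons y u =>
      rw [subwordCount_cons_cons]
      split_ifs with hxy
      · rw [hxy, List.count_map_of_injective _ _ List.cons_injective, ih]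
      · simp [List.count_eq_zero, hxy]

end Occurrences

section MahlerSum

variable {A M : Type*} [AddCommMonoid M]

/-- The Mahler expansion `w ↦ ∑_u binom(w, u) f(u)` with coefficients `f`. It is encoded as the sum
of `f` over the list of sublists of `w`, in which each word `u` is repeated `binom(w, u)` times. -/
def mahlerSum (f : List A → M) (w : List A) : M :=
  (w.sublists'.map f).sum

theorem mahlerSum_nil (f : List A → M) : mahlerSum f [] = f [] := by
  simp [mahlerSum]

theorem mahlerSum_cons (f : List A → M) (x : A) (w : List A) :
    mahlerSum f (x :: w) = mahlerSum f w + mahlerSum (fun u ↦ f (x :: u)) w := by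
  simp [mahlerSum, Function.comp_def]

theorem mahlerSum_add (f g : List A → M) (w : List A) :
    mahlerSum (f + g) w = mahlerSum f w + mahlerSum g w :=
  List.sum_map_add

theorem mahlerSum_zero (w : List A) : mahlerSum (0 : List A → M) w = 0 :=
  List.sum_map_zero

theorem mahlerSum_neg {G : Type*} [AddCommGroup G] (f : List A → G) (w : List A) :
    mahlerSum (-f) w = -mahlerSum f w := by
  rw [eq_neg_iff_add_eq_zero, ← mahlerSum_add, neg_add_cancel, mahlerSum_zero]

theorem mahlerSum_single_nil [DecidableEq A] (m : M) (w : List A) :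
    mahlerSum (Pi.single [] m) w = m := by
  induction w with
  | nil => rw [mahlerSum_nil, Pi.single_eq_same]
  | cons x w ih =>
    have hcons : (fun u : List A ↦ Pi.single (M := fun _ ↦ M) [] m (x :: u)) = 0 := by
      ext u
      simp
    rw [mahlerSum_cons, ih, hcons, mahlerSum_zero, add_zero]

theorem mahlerSum_eq_sum [DecidableEq A] {f : List A → M} {w : List A} {S : Finset (List A)}
    (hS : ∀ u, u.Sublist w → f u ≠ 0 → u ∈ S) :
    mahlerSum f w = ∑ u ∈ S, subwordCount w u • f u := by
  simp_rw [mahlerSum, Finset.sum_list_map_count, count_sublists'_eq_subwordCount]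
  refine Finset.sum_congr_of_eq_on_inter (fun u hu hu' ↦ ?_) (fun u _ hu ↦ ?_) fun _ _ _ ↦ rfl
  · have hfu : f u = 0 :=
      not_not.mp (mt (hS u (List.mem_sublists'.mp (List.mem_toFinset.mp hu))) hu')
    rw [hfu, smul_zero]
  · rw [← count_sublists'_eq_subwordCount,
      List.count_eq_zero_of_not_mem (mt List.mem_toFinset.mpr hu), zero_smul]

theorem mahlerSum_extend_zero [DecidableEq A] {p : List A → List A} (hp : p.Injective)
    (f : List A → M) {w : List A} {T : Finset (List A)} (hT : ∀ v, (p v).Sublist w → v ∈ T) :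
    mahlerSum (Function.extend p f 0) w = ∑ v ∈ T, subwordCount w (p v) • f v := by
  rw [mahlerSum_eq_sum (S := T.map ⟨p, hp⟩), Finset.sum_map]
  · simp only [Function.Embedding.coeFn_mk, hp.extend_apply]
  · intro u hu hfu
    obtain ⟨v, rfl⟩ : ∃ v, p v = u := by
      by_contra h
      exact hfu (Function.extend_apply' _ _ _ h)
    exact Finset.mem_map_of_mem _ (hT v hu)

end MahlerSum

section FactorCount

variable {A R : Type*} [Ring R]

/-- The Mahler coefficients of the indicator of the words with first letter `c`: the word `vc` has
coefficient `(-1) ^ |v|`, all other words have coefficient `0`. -/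
noncomputable def firstLetterCoeff (R : Type*) [Ring R] (c : A) : List A → R :=
  Function.extend (· ++ [c]) (fun v ↦ (-1) ^ v.length) 0

theorem firstLetterCoeff_nil (c : A) : firstLetterCoeff R c [] = 0 :=
  Function.extend_apply' _ _ _ (by simp)

theorem firstLetterCoeff_concat [DecidableEq A] (c d : A) (v : List A) :
    firstLetterCoeff R c (v ++ [d]) = if d = c then (-1) ^ v.length else 0 := by
  split_ifs with hdc
  · rw [hdc]
    exact (List.append_left_injective [c]).extend_apply _ _ v
  · exact Function.extend_apply' _ _ _ (by simp [Ne.symm hdc])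

theorem firstLetterCoeff_cons [DecidableEq A] (c x : A) :
    (fun u ↦ firstLetterCoeff R c (x :: u)) =
      -firstLetterCoeff R c + Pi.single [] (if x = c then 1 else 0) := by
  ext u
  rcases List.eq_nil_or_concat' u with rfl | ⟨v, d, rfl⟩
  · simpa [firstLetterCoeff_nil] using firstLetterCoeff_concat (R := R) c x []
  · have hcons := firstLetterCoeff_concat (R := R) c d (x :: v)
    rw [List.cons_append] at hcons
    split_ifs at hcons <;> simp_all [firstLetterCoeff_concat, pow_succ]

theorem mahlerSum_firstLetterCoeff [DecidableEq A] (c : A) (w : List A) :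
    mahlerSum (firstLetterCoeff R c) w = if w[0]? = some c then 1 else 0 := by
  cases w with
  | nil => simp [mahlerSum_nil, firstLetterCoeff_nil]
  | cons x w =>
    rw [mahlerSum_cons, firstLetterCoeff_cons, mahlerSum_add, mahlerSum_neg, mahlerSum_single_nil,
      add_neg_cancel_left]
    simp

theorem cons_append_singleton_injective (a c : A) :
    Function.Injective fun v : List A ↦ a :: (v ++ [c]) :=
  List.cons_injective.comp (List.append_left_injective [c])

/-- The Mahler coefficients of the number of factors `ac`: the word `avc` has coefficient
`(-1) ^ |v|`, all other words have coefficient `0`. -/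
noncomputable def factorCoeff (R : Type*) [Ring R] (a c : A) : List A → R :=
  Function.extend (fun v ↦ a :: (v ++ [c])) (fun v ↦ (-1) ^ v.length) 0

theorem factorCoeff_nil (a c : A) : factorCoeff R a c [] = 0 :=
  Function.extend_apply' _ _ _ (by simp)

theorem factorCoeff_cons [DecidableEq A] (a c x : A) (u : List A) :
    factorCoeff R a c (x :: u) = if x = a then firstLetterCoeff R c u else 0 := by
  split_ifs with hxa
  · rw [hxa]
    by_cases hu : ∃ v, v ++ [c] = u
    · obtain ⟨v, rfl⟩ := hu
      rw [firstLetterCoeff_concat, if_pos rfl]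
      exact (cons_append_singleton_injective a c).extend_apply _ _ v
    · rw [firstLetterCoeff, Function.extend_apply' _ _ _ hu]
      exact Function.extend_apply' _ _ _ (by simpa using hu)
  · exact Function.extend_apply' _ _ _ (by simp [Ne.symm hxa])

/-- The number of occurrences of the two-letter word `ac` as a factor of `w`. -/
def factorCount [DecidableEq A] (a c : A) (w : List A) : ℕ :=
  ((Finset.range w.length).filter fun i ↦ w[i]? = some a ∧ w[i + 1]? = some c).card

theorem factorCount_cons [DecidableEq A] (a c x : A) (w : List A) :
    factorCount a c (x :: w) =
      factorCount a c w + if x = a ∧ w[0]? = some c then 1 else 0 := by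
  simp only [factorCount, Finset.card_filter, List.length_cons, Finset.sum_range_succ',
    List.getElem?_cons_succ, List.getElem?_cons_zero, Option.some.injEq]

theorem mahlerSum_factorCoeff [DecidableEq A] (a c : A) (w : List A) :
    mahlerSum (factorCoeff R a c) w = factorCount a c w := by
  induction w with
  | nil => simp [mahlerSum_nil, factorCoeff_nil, factorCount]
  | cons x w ih =>
    have hcons : mahlerSum (fun u ↦ factorCoeff R a c (x :: u)) w =
        if x = a ∧ w[0]? = some c then 1 else 0 := by
      simp_rw [factorCoeff_cons]
      by_cases hxa : x = a
      · simpa [hxa] using mahlerSum_firstLetterCoeff c w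
      · simpa [hxa] using! mahlerSum_zero w
    rw [mahlerSum_cons, ih, hcons, factorCount_cons, Nat.cast_add, Nat.cast_ite, Nat.cast_one,
      Nat.cast_zero]

end FactorCount

theorem factor_count_mahler_expansion_general {A R : Type*} [DecidableEq A] [Ring R] (a c : A)
    {w : List A} {T : Finset (List A)} (hT : ∀ v, (a :: (v ++ [c])).Sublist w → v ∈ T) :
    (((Finset.range w.length).filter
        (fun i ↦ w[i]? = some a ∧ w[i + 1]? = some c)).card : R) =
      ∑ v ∈ T, (-1 : R) ^ v.length * subwordCount w (a :: (v ++ [c])) := by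
  simp_rw [← nsmul_eq_mul']
  exact (mahlerSum_factorCoeff a c w).symm.trans
    (mahlerSum_extend_zero (cons_append_singleton_injective a c) _ hT)

/-- For letters `a, c` and every word `w`, the number of occurrences of the two-letter word
`ac` as a factor of `w` (the number of indices `i` with `w_i = a` and `w_{i+1} = c`) equals
`∑_v (−1)^{|v|} · binom(w, avc)`, the sum being over all words `v`; only words `v` with
`avc` a subword of `w` contribute, so it suffices to sum over the (distinct) sublists
of `w`. -/
theorem factor_count_mahler_expansion {A : Type*} [Fintype A] [DecidableEq A]
    (a c : A) (w : List A) :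
    ((((Finset.range w.length).filter
        (fun i => w[i]? = some a ∧ w[i + 1]? = some c)).card : ℚ)) =
      ∑ v ∈ w.sublists.toFinset,
        (-1 : ℚ) ^ v.length * subwordCount w (a :: (v ++ [c])) :=
  factor_count_mahler_expansion_general a c fun v hv ↦ by
    have hvw : v.Sublist w :=
      ((List.sublist_append_left v [c]).trans (List.sublist_cons_self a _)).trans hv
    simpa using hvw
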